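/- Let C_X ≤ (Fin 12 → ZMod 2) be the row space of the five vectors (three blocks of four): 1111 0000 0000, 0000 1111 0000, 0000 0000 1111, 1100 1010 0110, 0110 1100 1010, and let C_Z ≤ (Fin 12 → ZMod 2) be the row space of the five vectors: 1111 0000 0000, 0000 1111 0000, 0000 0000 1111, 0101 0011 0110, 0110 0101 0011. Then: (i) C_X and C_Z are orthogonal (⟨u,v⟩ = 0 for all u ∈ C_X, v ∈ C_Z); (ii) both C_X and C_Z have F₂-dimension 5; (iii) the minimum Hamming weight over {v : ∀ h ∈ C_X, ⟨v,h⟩ = 0, v ∉ C_Z} equals 4, and the minimum Hamming weight over {v : ∀ h ∈ C_Z, ⟨v,h⟩ = 0, v ∉ C_X} equals 4. (That is, this CSS code is the [[12,2,4]] code obtained by concatenating the [[3,1,2]]₄ code with the [[4,2,2]] code.) -/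

import Mathlib

/-- The standard dot product on binary vectors. -/
def dotV {n : ℕ} (u v : Fin n → ZMod 2) : ZMod 2 := ∑ j, u j * v j

/-- The Hamming weight of a binary vector. -/
def hw {n : ℕ} (v : Fin n → ZMod 2) : ℕ := (Finset.univ.filter fun j => v j ≠ 0).card

def x1 : Fin 12 → ZMod 2 := ![1,1,1,1, 0,0,0,0, 0,0,0,0]
def x2 : Fin 12 → ZMod 2 := ![0,0,0,0, 1,1,1,1, 0,0,0,0]
def x3 : Fin 12 → ZMod 2 := ![0,0,0,0, 0,0,0,0, 1,1,1,1]
def x4 : Fin 12 → ZMod 2 := ![1,1,0,0, 1,0,1,0, 0,1,1,0]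
def x5 : Fin 12 → ZMod 2 := ![0,1,1,0, 1,1,0,0, 1,0,1,0]

def z1 : Fin 12 → ZMod 2 := ![1,1,1,1, 0,0,0,0, 0,0,0,0]
def z2 : Fin 12 → ZMod 2 := ![0,0,0,0, 1,1,1,1, 0,0,0,0]
def z3 : Fin 12 → ZMod 2 := ![0,0,0,0, 0,0,0,0, 1,1,1,1]
def z4 : Fin 12 → ZMod 2 := ![0,1,0,1, 0,0,1,1, 0,1,1,0]
def z5 : Fin 12 → ZMod 2 := ![0,1,1,0, 0,1,0,1, 0,0,1,1]

/-- The X-check row space of the `[[12,2,4]]` code. -/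
def CX : Submodule (ZMod 2) (Fin 12 → ZMod 2) :=
  Submodule.span (ZMod 2) {x1, x2, x3, x4, x5}

/-- The Z-check row space of the `[[12,2,4]]` code. -/
def CZ : Submodule (ZMod 2) (Fin 12 → ZMod 2) :=
  Submodule.span (ZMod 2) {z1, z2, z3, z4, z5}

theorem dotV_span_right {n : ℕ} (S : Set (Fin n → ZMod 2)) (u : Fin n → ZMod 2)
    (h : ∀ s ∈ S, dotV u s = 0) : ∀ v ∈ Submodule.span (ZMod 2) S, dotV u v = 0 := by
  intro v hv
  induction hv using Submodule.span_induction with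
  | mem x hx => exact h x hx
  | zero => simp [dotV]
  | add x y _ _ hx hy =>
    simp only [dotV, Pi.add_apply, mul_add, Finset.sum_add_distrib] at *
    rw [hx, hy, add_zero]
  | smul a x _ hx =>
    simp only [dotV, Pi.smul_apply, smul_eq_mul, mul_left_comm _ a, ← Finset.mul_sum] at *
    rw [hx, mul_zero]

theorem dotV_comm {n : ℕ} (u v : Fin n → ZMod 2) : dotV u v = dotV v u := by
  simp only [dotV, mul_comm]

theorem mem_perp_CX (v : Fin 12 → ZMod 2) (h1 : dotV v x1 = 0) (h2 : dotV v x2 = 0)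
    (h3 : dotV v x3 = 0) (h4 : dotV v x4 = 0) (h5 : dotV v x5 = 0) :
    ∀ h ∈ CX, dotV v h = 0 := by
  refine dotV_span_right _ v ?_
  intro s hs
  simp only [Set.mem_insert_iff, Set.mem_singleton_iff] at hs
  rcases hs with h | h | h | h | h
  · rw [h, h1]
  · rw [h, h2]
  · rw [h, h3]
  · rw [h, h4]
  · rw [h, h5]

theorem mem_perp_CZ (v : Fin 12 → ZMod 2) (h1 : dotV v z1 = 0) (h2 : dotV v z2 = 0)
    (h3 : dotV v z3 = 0) (h4 : dotV v z4 = 0) (h5 : dotV v z5 = 0) :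
    ∀ h ∈ CZ, dotV v h = 0 := by
  refine dotV_span_right _ v ?_
  intro s hs
  simp only [Set.mem_insert_iff, Set.mem_singleton_iff] at hs
  rcases hs with h | h | h | h | h
  · rw [h, h1]
  · rw [h, h2]
  · rw [h, h3]
  · rw [h, h4]
  · rw [h, h5]

theorem orth : ∀ u ∈ CX, ∀ v ∈ CZ, dotV u v = 0 := by
  intro u hu v hv
  rw [dotV_comm]
  refine mem_perp_CX v ?_ ?_ ?_ ?_ ?_ u hu <;> rw [dotV_comm] <;> revert v <;>
    refine fun v hv => mem_perp_CZ _ ?_ ?_ ?_ ?_ ?_ v hv <;> decide +kernel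

theorem finrank_CX : Module.finrank (ZMod 2) CX = 5 := by
  have hli : LinearIndependent (ZMod 2) ![x1, x2, x3, x4, x5] := by
    rw [Fintype.linearIndependent_iff]
    intro g hg
    have e0 := congr_fun hg 3
    have e1 := congr_fun hg 7
    have e2 := congr_fun hg 11
    have e3 := congr_fun hg 0
    have e4 := congr_fun hg 2
    simp [Fin.sum_univ_succ, x1, x2, x3, x4, x5] at e0 e1 e2 e3 e4
    intro i
    fin_cases i <;> simp_all
  have := finrank_span_eq_card hli
  have hr : Set.range ![x1, x2, x3, x4, x5] = {x1, x2, x3, x4, x5} := by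
    ext y
    simp
    tauto
  rw [hr] at this
  exact this.trans (Fintype.card_fin 5)

theorem finrank_CZ : Module.finrank (ZMod 2) CZ = 5 := by
  have hli : LinearIndependent (ZMod 2) ![z1, z2, z3, z4, z5] := by
    rw [Fintype.linearIndependent_iff]
    intro g hg
    have e0 := congr_fun hg 0
    have e1 := congr_fun hg 4
    have e2 := congr_fun hg 8
    have e3 := congr_fun hg 3
    have e4 := congr_fun hg 2
    simp [Fin.sum_univ_succ, z1, z2, z3, z4, z5] at e0 e1 e2 e3 e4
    intro i
    fin_cases i <;> simp_all
  have := finrank_span_eq_card hli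
  have hr : Set.range ![z1, z2, z3, z4, z5] = {z1, z2, z3, z4, z5} := by
    ext y
    simp
    tauto
  rw [hr] at this
  exact this.trans (Fintype.card_fin 5)

/-- Enumeration of the vectors all of whose three blocks have even weight. -/
theorem lower_bound (p q : Fin 12 → ZMod 2)
    (key : ∀ a b c d : ZMod 2, a + b + c + d = 0 → ∀ e f g h : ZMod 2, e + f + g + h = 0 →
      ∀ i j k l : ZMod 2, i + j + k + l = 0 →
      hw ![a, b, c, d, e, f, g, h, i, j, k, l] < 4 →
      dotV ![a, b, c, d, e, f, g, h, i, j, k, l] p = 0 →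
      dotV ![a, b, c, d, e, f, g, h, i, j, k, l] q = 0 →
      ![a, b, c, d, e, f, g, h, i, j, k, l] = 0)
    (v : Fin 12 → ZMod 2) (h1 : dotV v x1 = 0) (h2 : dotV v x2 = 0)
    (h3 : dotV v x3 = 0) (hp : dotV v p = 0) (hq : dotV v q = 0) (hv : v ≠ 0) : 4 ≤ hw v := by
  by_contra hlt
  push Not at hlt
  have hv' : v = ![v 0, v 1, v 2, v 3, v 4, v 5, v 6, v 7, v 8, v 9, v 10, v 11] := by
    ext i
    fin_cases i <;> rfl
  apply hv
  rw [hv'] at hlt hp hq ⊢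
  refine key _ _ _ _ ?_ _ _ _ _ ?_ _ _ _ _ ?_ hlt hp hq
  · simpa [dotV, x1, Fin.sum_univ_succ, add_assoc] using h1
  · simpa [dotV, x2, Fin.sum_univ_succ, add_assoc] using h2
  · simpa [dotV, x3, Fin.sum_univ_succ, add_assoc] using h3

set_option maxSynthPendingDepth 50 in
set_option synthInstance.maxHeartbeats 400000 in
set_option synthInstance.maxSize 4096 in
theorem lower_X : ∀ v : Fin 12 → ZMod 2, dotV v x1 = 0 → dotV v x2 = 0 → dotV v x3 = 0 →
    dotV v x4 = 0 → dotV v x5 = 0 → v ≠ 0 → 4 ≤ hw v :=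
  lower_bound x4 x5 (by decide +kernel)

set_option maxSynthPendingDepth 50 in
set_option synthInstance.maxHeartbeats 400000 in
set_option synthInstance.maxSize 4096 in
theorem lower_Z : ∀ v : Fin 12 → ZMod 2, dotV v x1 = 0 → dotV v x2 = 0 → dotV v x3 = 0 →
    dotV v z4 = 0 → dotV v z5 = 0 → v ≠ 0 → 4 ≤ hw v :=
  lower_bound z4 z5 (by decide +kernel)

theorem sInf_eq_four (S : Set (Fin 12 → ZMod 2)) (w : Fin 12 → ZMod 2) (hw4 : hw w = 4)
    (hS : w ∈ S) (hlow : ∀ v ∈ S, 4 ≤ hw v) : sInf (hw '' S) = 4 := by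
  apply IsLeast.csInf_eq
  refine ⟨⟨w, hS, hw4⟩, ?_⟩
  rintro _ ⟨v, hv, rfl⟩
  exact hlow v hv

/-- A weight-four vector orthogonal to `CX` but outside `CZ`. -/
def wX : Fin 12 → ZMod 2 := ![0,0,0,0, 0,0,1,1, 0,1,0,1]

/-- A weight-four vector orthogonal to `CZ` but outside `CX`. -/
def wZ : Fin 12 → ZMod 2 := ![0,0,0,0, 0,0,1,1, 0,1,1,0]

theorem stmt15 :
    (∀ u ∈ CX, ∀ v ∈ CZ, dotV u v = 0) ∧
    Module.finrank (ZMod 2) CX = 5 ∧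
    Module.finrank (ZMod 2) CZ = 5 ∧
    sInf (hw '' {v : Fin 12 → ZMod 2 | (∀ h ∈ CX, dotV v h = 0) ∧ v ∉ CZ}) = 4 ∧
    sInf (hw '' {v : Fin 12 → ZMod 2 | (∀ h ∈ CZ, dotV v h = 0) ∧ v ∉ CX}) = 4 := by
  refine ⟨orth, finrank_CX, finrank_CZ, ?_, ?_⟩
  · refine sInf_eq_four _ wX (by decide +kernel) ⟨?_, ?_⟩ ?_
    · apply mem_perp_CX <;> decide +kernel
    · intro hmem
      have h0 : dotV wZ wX = 0 := by
        refine mem_perp_CZ wZ ?_ ?_ ?_ ?_ ?_ wX hmem <;> decide +kernel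
      exact absurd h0 (by decide +kernel)
    · rintro v ⟨hv, hn⟩
      refine lower_X v (hv _ ?_) (hv _ ?_) (hv _ ?_) (hv _ ?_) (hv _ ?_) ?_
      iterate 5 exact Submodule.subset_span (by simp)
      rintro rfl
      exact hn (zero_mem _)
  · refine sInf_eq_four _ wZ (by decide +kernel) ⟨?_, ?_⟩ ?_
    · apply mem_perp_CZ <;> decide +kernel
    · intro hmem
      have h0 : dotV wX wZ = 0 := by
        refine mem_perp_CX wX ?_ ?_ ?_ ?_ ?_ wZ hmem <;> decide +kernel
      exact absurd h0 (by decide +kernel)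
    · rintro v ⟨hv, hn⟩
      refine lower_Z v (hv z1 ?_) (hv z2 ?_) (hv z3 ?_) (hv _ ?_) (hv _ ?_) ?_
      iterate 5 exact Submodule.subset_span (by simp)
      rintro rfl
      exact hn (zero_mem _)
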